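/- The 4-color Ramsey number R_4(C_4) is at most 19; that is, every 4-coloring of the edges of the complete graph K_19 contains a monochromatic 4-cycle. -/

import Mathlib

open SimpleGraph

/-- `H` is contained in `G` as a subgraph (injective graph homomorphism). -/
def Contains {W V : Type*} (H : SimpleGraph W) (G : SimpleGraph V) : Prop :=
  ∃ f : H →g G, Function.Injective f

/-- The `i`-th color class of an edge coloring `c` of the complete graph on `V`. -/
def colorClass {V : Type*} {k : ℕ} (c : Sym2 V → Fin k) (i : Fin k) : SimpleGraph V :=
  SimpleGraph.fromRel (fun a b => c s(a, b) = i)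

/-!
In a graph on `n` vertices without four-cycles, two vertices have at most one common neighbor.
Counting walks of length two from a vertex `v` lying on `t` triangles gives
`∑ u ∈ N(v), d(u) < n + 2t`, where `2t ≤ d(v)`; moreover the numbers `t` add up to a multiple of
three. Summed over `v`, this bounds the number of edges by 19 when `n = 11`. A minimal
counterexample to a bound for larger `n` has large minimum degree `q`, so nearly all degrees equal
`q`, and the local inequality limits the number of neighbors of degree exceeding `q`. Since a pair
of such vertices has at most one common neighbor, a convexity estimate gives a contradiction.
This climbs, one vertex at a time, to the bound of 42 edges when `n = 19`, and `4 * 42 < 171`.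
-/

section

open Finset

section General

variable {V : Type*} [Fintype V] (G : SimpleGraph V) [DecidableRel G.Adj]

lemma sum_sum_degree_neighborFinset :
    ∑ v, ∑ u ∈ G.neighborFinset v, G.degree u = ∑ v, G.degree v ^ 2 := by
  rw [sum_comm' (t' := univ) (s' := fun u => G.neighborFinset u) (by simp [G.adj_comm])]
  simp [sq]

variable [DecidableEq V]

/-- The triangles of `G` through the vertex `v`, as vertex sets. -/
def trianglesAt (v : V) : Finset (Finset V) := {s ∈ G.cliqueFinset 3 | v ∈ s}

variable {G} in
lemma mem_trianglesAt {v : V} {s : Finset V} :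
    s ∈ trianglesAt G v ↔ G.IsNClique 3 s ∧ v ∈ s := by
  simp [trianglesAt]

lemma sum_card_trianglesAt : ∑ v, #(trianglesAt G v) = 3 * #(G.cliqueFinset 3) := by
  have hdouble := sum_card_bipartiteAbove_eq_sum_card_bipartiteBelow
    (s := univ) (t := G.cliqueFinset 3) (fun (v : V) s => v ∈ s)
  have hthree : ∀ s ∈ G.cliqueFinset 3, #(univ.bipartiteBelow (fun (v : V) s => v ∈ s) s) = 3 := by
    intro s hs
    simpa [bipartiteBelow] using (G.mem_cliqueFinset_iff.1 hs).card_eq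
  rw [sum_const_nat hthree] at hdouble
  rw [mul_comm, ← hdouble]
  rfl

variable {G} in
lemma card_filter_mem_trianglesAt {u v : V} (huv : G.Adj u v) :
    #{s ∈ trianglesAt G v | u ∈ s} = #(G.neighborFinset u ∩ G.neighborFinset v) := by
  symm
  apply card_bij (fun w _ => {v, u, w})
  · intro w hw
    simp only [mem_inter, mem_neighborFinset] at hw
    simp [mem_trianglesAt, is3Clique_triple_iff, hw, huv.symm]
  · intro w hw w' hw' h
    simp only [mem_inter, mem_neighborFinset] at hw hw'
    have : w ∈ ({v, u, w'} : Finset V) := by simp [← h]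
    simpa [hw.1.ne', hw.2.ne'] using this
  · intro s hs
    simp only [mem_filter, mem_trianglesAt] at hs
    obtain ⟨⟨hclique, hv⟩, hu⟩ := hs
    have hu' : u ∈ s.erase v := mem_erase.2 ⟨huv.ne, hu⟩
    obtain ⟨w, hw⟩ : ∃ w, (s.erase v).erase u = {w} := by
      rw [← card_eq_one, card_erase_of_mem hu', card_erase_of_mem hv, hclique.card_eq]
    have hs : {v, u, w} = s := by rw [← hw, insert_erase hu', insert_erase hv]
    rw [← hs, is3Clique_triple_iff] at hclique
    exact ⟨w, by simp [hclique], hs⟩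

/-- Each triangle through `v` is counted once for each of its two other vertices. -/
lemma sum_neighborFinset_card_inter (v : V) :
    ∑ u ∈ G.neighborFinset v, #(G.neighborFinset u ∩ G.neighborFinset v) =
      2 * #(trianglesAt G v) := by
  have hdouble := sum_card_bipartiteAbove_eq_sum_card_bipartiteBelow
    (s := G.neighborFinset v) (t := trianglesAt G v) (fun u s => u ∈ s)
  have htwo : ∀ s ∈ trianglesAt G v,
      #((G.neighborFinset v).bipartiteBelow (fun u s => u ∈ s) s) = 2 := by
    intro s hs
    rw [mem_trianglesAt] at hs
    have : (G.neighborFinset v).bipartiteBelow (fun u s => u ∈ s) s = s.erase v := by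
      ext u
      simp only [mem_bipartiteBelow, mem_neighborFinset, mem_erase]
      exact ⟨fun h => ⟨h.1.ne', h.2⟩, fun h => ⟨hs.1.isClique hs.2 h.2 h.1.symm, h.2⟩⟩
    rw [this, card_erase_of_mem hs.2, hs.1.card_eq]
  rw [sum_const_nat htwo, mul_comm] at hdouble
  rw [← hdouble]
  refine sum_congr rfl fun u hu => (card_filter_mem_trianglesAt ?_).symm
  exact ((G.mem_neighborFinset v u).1 hu).symm

lemma sum_card_neighborFinset_inter (S : Finset V) :
    ∑ v, #(G.neighborFinset v ∩ S) = ∑ u ∈ S, G.degree u := by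
  have hdouble := sum_card_bipartiteAbove_eq_sum_card_bipartiteBelow
    (s := univ) (t := S) G.Adj
  have habove (v : V) : S.bipartiteAbove G.Adj v = G.neighborFinset v ∩ S := by
    ext u; simp [and_comm]
  have hbelow (u : V) : univ.bipartiteBelow G.Adj u = G.neighborFinset u := by
    ext v; simp [G.adj_comm]
  simpa only [habove, hbelow, card_neighborFinset_eq_degree] using hdouble

end General

/-- `G` contains no four-cycle, not necessarily induced. -/
abbrev C4Free {V : Type*} (G : SimpleGraph V) : Prop := (cycleGraph 4).Free G

namespace C4Free

variable {V : Type*} {G : SimpleGraph V}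

lemma eq_of_adj (hG : C4Free G) {u v x y : V} (huv : u ≠ v) (hux : G.Adj u x) (hvx : G.Adj v x)
    (huy : G.Adj u y) (hvy : G.Adj v y) : x = y := by
  by_contra hxy
  refine hG ((cycleGraph_isContained_iff (by norm_num)).2
    ⟨u, .cons hux (.cons hvx.symm (.cons hvy (.cons huy.symm .nil))), ?_, rfl⟩)
  simp [Walk.isCycle_def, hux.ne, huy.ne, hvy.ne, hux.ne', hvx.ne', huy.ne', huv, huv.symm, hxy]

variable [Fintype V] [DecidableEq V] [DecidableRel G.Adj]

lemma card_neighborFinset_inter_le_one (hG : C4Free G) {u v : V} (huv : u ≠ v) :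
    #(G.neighborFinset u ∩ G.neighborFinset v) ≤ 1 := by
  rw [card_le_one]
  intro x hx y hy
  simp only [mem_inter, mem_neighborFinset] at hx hy
  exact hG.eq_of_adj huv hx.1 hx.2 hy.1 hy.2

lemma two_mul_card_trianglesAt_le (hG : C4Free G) (v : V) :
    2 * #(trianglesAt G v) ≤ G.degree v := by
  rw [← sum_neighborFinset_card_inter, ← card_neighborFinset_eq_degree, card_eq_sum_ones]
  refine sum_le_sum fun u hu => hG.card_neighborFinset_inter_le_one ?_
  exact ((G.mem_neighborFinset v u).1 hu).ne'

lemma two_mul_card_trianglesAt_lt (hG : C4Free G) {u v : V} (huv : G.Adj u v)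
    (hv : trianglesAt G v = ∅) : 2 * #(trianglesAt G u) < G.degree u := by
  have hle : ∀ w ∈ G.neighborFinset u, #(G.neighborFinset w ∩ G.neighborFinset u) ≤ 1 :=
    fun w hw => hG.card_neighborFinset_inter_le_one ((G.mem_neighborFinset u w).1 hw).ne'
  have hzero : #(G.neighborFinset v ∩ G.neighborFinset u) = 0 := by
    rw [inter_comm, ← card_filter_mem_trianglesAt huv, hv, filter_empty, card_empty]
  rw [← sum_neighborFinset_card_inter, ← card_neighborFinset_eq_degree, card_eq_sum_ones]
  exact sum_lt_sum hle ⟨v, by simpa using huv, by omega⟩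

/-- The left-hand sum counts the walks of length two from `v`; at most one of them ends at each
non-neighbor of `v` other than `v` itself. -/
lemma sum_degree_neighborFinset_lt (hG : C4Free G) (v : V) :
    ∑ u ∈ G.neighborFinset v, G.degree u < Fintype.card V + 2 * #(trianglesAt G v) := by
  set S := insert v (G.neighborFinset v)
  have hv : v ∉ G.neighborFinset v := by simp
  have hclosed : ∑ w ∈ S, #(G.neighborFinset w ∩ G.neighborFinset v) =
      G.degree v + 2 * #(trianglesAt G v) := by
    rw [sum_insert hv, inter_self, card_neighborFinset_eq_degree, sum_neighborFinset_card_inter]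
  have hfar : ∑ w ∈ Sᶜ, #(G.neighborFinset w ∩ G.neighborFinset v) ≤ #Sᶜ := by
    rw [card_eq_sum_ones]
    refine sum_le_sum fun w hw => hG.card_neighborFinset_inter_le_one ?_
    rintro rfl
    exact mem_compl.1 hw (mem_insert_self _ _)
  have hS : #S = G.degree v + 1 := by
    rw [card_insert_of_notMem hv, card_neighborFinset_eq_degree]
  have hcompl : #S + #Sᶜ = Fintype.card V := card_add_card_compl S
  rw [← sum_card_neighborFinset_inter, ← sum_add_sum_compl S]
  omega

lemma sum_card_neighborFinset_inter_mul_sub_one_le (hG : C4Free G) (S : Finset V) :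
    ∑ v, (#(G.neighborFinset v ∩ S) * (#(G.neighborFinset v ∩ S) - 1) : ℤ) ≤
      #S * (#S - 1) := by
  have hoffDiag (T : Finset V) : (#T * (#T - 1) : ℤ) = #T.offDiag := by
    rw [offDiag_card, Nat.cast_sub (Nat.le_mul_self _)]
    push_cast
    ring
  simp only [hoffDiag]
  norm_cast
  rw [← card_biUnion]
  · refine card_le_card (biUnion_subset.2 fun v _ => ?_)
    exact offDiag_mono inter_subset_right
  · intro v _ w _ hvw
    rw [Function.onFun, Finset.disjoint_left]
    intro p hpv hpw
    simp only [mem_offDiag, mem_inter, mem_neighborFinset] at hpv hpw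
    exact hpv.2.2 (hG.eq_of_adj hvw hpv.1.1 hpw.1.1 hpv.2.1.1 hpw.2.1.1)

end C4Free

/-- Since each `2 * #(trianglesAt G v)` is even, summing the local bound improves the classical
estimate `∑ d(d-1) ≤ n(n-1)` by one for every vertex of odd degree; the coefficients
are those of the chord of `d² - 2⌊d/2⌋` through `2m - 2` and `2m`. -/
lemma C4Free.mul_card_edgeFinset_le {V : Type*} [Fintype V] {G : SimpleGraph V}
    [DecidableRel G.Adj] (hG : C4Free G) (m : ℤ) :
    (4 * m - 3) * (2 * #G.edgeFinset) ≤
      Fintype.card V * (Fintype.card V - 1 + 4 * m * (m - 1)) := by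
  classical
  have hchord (v : V) : (4 * m - 3) * G.degree v - 4 * m * (m - 1) ≤
      (G.degree v : ℤ) ^ 2 - 2 * #(trianglesAt G v) := by
    have htri := hG.two_mul_card_trianglesAt_le v
    zify at htri
    generalize (G.degree v : ℤ) = d, (#(trianglesAt G v) : ℤ) = t at *
    obtain hd | rfl | hd : d ≤ 2 * m - 2 ∨ d = 2 * m - 1 ∨ 2 * m ≤ d := by omega
    · nlinarith [mul_nonneg (sub_nonneg.2 hd) (by omega : 0 ≤ 2 * m - d)]
    · have : t ≤ m - 1 := by omega
      linarith
    · nlinarith [mul_nonneg (sub_nonneg.2 hd) (by omega : 0 ≤ d - 2 * m + 2)]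
  have hlocal : (∑ v, (G.degree v : ℤ) ^ 2) + Fintype.card V ≤
      Fintype.card V * Fintype.card V + ∑ v, (2 * #(trianglesAt G v) : ℤ) := by
    have := sum_le_sum fun v (_ : v ∈ univ) =>
      Nat.succ_le_of_lt (hG.sum_degree_neighborFinset_lt v)
    simp only [Nat.succ_eq_add_one, sum_add_distrib, sum_sum_degree_neighborFinset, sum_const,
      card_univ, smul_eq_mul, mul_one] at this
    exact_mod_cast this
  have hedges : ∑ v, (G.degree v : ℤ) = 2 * #G.edgeFinset := by
    exact_mod_cast G.sum_degrees_eq_twice_card_edges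
  have hsum := sum_le_sum fun v (_ : v ∈ univ) => hchord v
  simp only [sum_sub_distrib, ← mul_sum, hedges, sum_const, card_univ, nsmul_eq_mul] at hsum hlocal
  linarith

section HighDegree

variable {V : Type*} [Fintype V] (G : SimpleGraph V) [DecidableRel G.Adj] (q : ℕ)

/-- The vertices of degree exceeding `q`, to be used when `q` is a lower bound for all degrees. -/
def highDegree : Finset V := {v | q < G.degree v}

variable {G q}

lemma mem_highDegree {v : V} : v ∈ highDegree G q ↔ q < G.degree v := by
  simp [highDegree]

lemma mul_card_add_card_highDegree_le (hq : ∀ v, q ≤ G.degree v) :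
    q * Fintype.card V + #(highDegree G q) ≤ 2 * #G.edgeFinset := by
  have hle : ∀ v, q + (if q < G.degree v then 1 else 0) ≤ G.degree v := by
    intro v
    have := hq v
    split_ifs <;> omega
  rw [← G.sum_degrees_eq_twice_card_edges]
  refine le_trans (le_of_eq ?_) (sum_le_sum fun v _ => hle v)
  simp [highDegree, sum_add_distrib, mul_comm]

lemma two_mul_card_edgeFinset_le_of_degree_le {r : ℕ} (hr : ∀ v, G.degree v ≤ q + r) :
    2 * #G.edgeFinset ≤ q * Fintype.card V + r * #(highDegree G q) := by
  have hle : ∀ v, G.degree v ≤ q + r * (if q < G.degree v then 1 else 0) := by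
    intro v
    have := hr v
    split_ifs <;> omega
  rw [← G.sum_degrees_eq_twice_card_edges]
  refine (sum_le_sum fun v _ => hle v).trans (le_of_eq ?_)
  simp [highDegree, sum_add_distrib, -mul_ite, ← mul_sum, mul_comm]

variable [DecidableEq V]

variable (G q) in
/-- The number of neighbors of `v` of degree exceeding `q`. -/
def highDegreeCount (v : V) : ℕ := #(G.neighborFinset v ∩ highDegree G q)

lemma mul_card_add_sum_highDegreeCount (hq : ∀ v, q ≤ G.degree v) :
    q * Fintype.card V + ∑ v, highDegreeCount G q v =
      q * #(highDegree G q) + 2 * #G.edgeFinset := by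
  have hlow : ∑ v ∈ (highDegree G q)ᶜ, G.degree v = q * #(highDegree G q)ᶜ := by
    rw [mul_comm]
    refine sum_const_nat fun v hv => le_antisymm ?_ (hq v)
    simpa [mem_highDegree] using hv
  simp only [highDegreeCount]
  rw [sum_card_neighborFinset_inter, ← G.sum_degrees_eq_twice_card_edges,
    ← sum_add_sum_compl (highDegree G q), hlow, ← card_add_card_compl (highDegree G q)]
  ring

lemma sum_affine_degree_highDegree (hq : ∀ v, q ≤ G.degree v) (α β γ δ : ℤ) :
    ∑ v, (α * highDegreeCount G q v + β * G.degree v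
        + γ * (if q < G.degree v then 1 else 0) + δ) =
      α * (q * #(highDegree G q) + 2 * #G.edgeFinset - q * Fintype.card V)
        + β * (2 * #G.edgeFinset) + γ * #(highDegree G q) + δ * Fintype.card V := by
  have hinter := mul_card_add_sum_highDegreeCount hq
  have hedges := G.sum_degrees_eq_twice_card_edges
  zify at hinter hedges
  simp only [sum_add_distrib, ← mul_sum, hedges, ← eq_sub_iff_add_eq'.2 hinter]
  simp [highDegree, mul_comm]

/-- The left-hand side is the chord of `x(x-1)` through `m` and `m + 1`. -/
lemma two_mul_mul_sub_le_mul_sub_one (m x : ℤ) : 2 * m * x - m * (m + 1) ≤ x * (x - 1) := by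
  obtain h | h : x ≤ m ∨ m + 1 ≤ x := by omega
  · nlinarith
  · nlinarith

/-- With `a` for `highDegreeCount G q v`, the left-hand side is the chord `4a - 6` of `a(a-1)` when
the degree is `q` or `q + 1`, and is `-1` in the remaining case. -/
lemma affine_degree_highDegreeCount_le {v : V} (hq : q ≤ G.degree v)
    (hv : G.degree v ≤ q + 1 ∨ G.degree v = q + 2 ∧ highDegreeCount G q v = 0) :
    4 * (highDegreeCount G q v : ℤ) + 5 * G.degree v
        + -5 * (if q < G.degree v then 1 else 0) + -(5 * q + 6) ≤
      highDegreeCount G q v * (highDegreeCount G q v - 1) := by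
  have := two_mul_mul_sub_le_mul_sub_one 2 (highDegreeCount G q v)
  have := two_mul_mul_sub_le_mul_sub_one 0 (highDegreeCount G q v)
  split_ifs <;> omega

namespace C4Free

lemma mul_degree_add_highDegreeCount_lt (hG : C4Free G) (hq : ∀ v, q ≤ G.degree v) (v : V) :
    q * G.degree v + highDegreeCount G q v <
      Fintype.card V + 2 * #(trianglesAt G v) := by
  refine lt_of_le_of_lt ?_ (hG.sum_degree_neighborFinset_lt v)
  have hle : ∀ u, q + (if u ∈ highDegree G q then 1 else 0) ≤ G.degree u := by
    intro u
    have := hq u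
    simp only [mem_highDegree]
    split_ifs <;> omega
  refine le_trans (le_of_eq ?_) (sum_le_sum fun u _ => hle u)
  simp [highDegreeCount, sum_add_distrib, mul_comm]

lemma mul_degree_add_highDegreeCount_lt_add_two_mul_half (hG : C4Free G)
    (hq : ∀ v, q ≤ G.degree v) (v : V) :
    q * G.degree v + highDegreeCount G q v < Fintype.card V + 2 * (G.degree v / 2) := by
  have := hG.mul_degree_add_highDegreeCount_lt hq v
  have := hG.two_mul_card_trianglesAt_le v
  omega

lemma affine_highDegree_le (hG : C4Free G) (hq : ∀ v, q ≤ G.degree v) {α β γ δ : ℤ}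
    (h : ∀ v, α * highDegreeCount G q v + β * G.degree v
        + γ * (if q < G.degree v then 1 else 0) + δ ≤
      highDegreeCount G q v * (highDegreeCount G q v - 1)) :
    α * (q * #(highDegree G q) + 2 * #G.edgeFinset - q * Fintype.card V)
        + β * (2 * #G.edgeFinset) + γ * #(highDegree G q) + δ * Fintype.card V ≤
      #(highDegree G q) * (#(highDegree G q) - 1) := by
  rw [← sum_affine_degree_highDegree hq]
  exact (sum_le_sum fun v _ => h v).trans (hG.sum_card_neighborFinset_inter_mul_sub_one_le _)

lemma affine_highDegree_eq (hG : C4Free G) (hq : ∀ v, q ≤ G.degree v) {α β γ δ : ℤ}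
    (h : ∀ v, α * highDegreeCount G q v + β * G.degree v
        + γ * (if q < G.degree v then 1 else 0) + δ ≤
      highDegreeCount G q v * (highDegreeCount G q v - 1))
    (htight : (#(highDegree G q) * (#(highDegree G q) - 1) : ℤ) ≤
      α * (q * #(highDegree G q) + 2 * #G.edgeFinset - q * Fintype.card V)
        + β * (2 * #G.edgeFinset) + γ * #(highDegree G q) + δ * Fintype.card V) (v : V) :
    α * highDegreeCount G q v + β * G.degree v
        + γ * (if q < G.degree v then 1 else 0) + δ =
      highDegreeCount G q v * (highDegreeCount G q v - 1) := by
  rw [← sum_affine_degree_highDegree hq] at htight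
  refine (sum_eq_sum_iff_of_le fun v _ => h v).1 (le_antisymm ?_ ?_) v (mem_univ v)
  · exact sum_le_sum fun v _ => h v
  · exact (hG.sum_card_neighborFinset_inter_mul_sub_one_le _).trans htight

/-- The parabola `a(a-1)` is replaced by its chord through `m` and `m + 1`, which at a vertex of
degree exceeding `q` may be raised by `(m - s) * (m + 1 - s)`. -/
lemma two_mul_mul_highDegree_le (hG : C4Free G) (hq : ∀ v, q ≤ G.degree v) {m s : ℤ}
    (hsm : s ≤ m) (hs : ∀ v ∈ highDegree G q, (highDegreeCount G q v : ℤ) ≤ s) :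
    2 * m * (q * #(highDegree G q) + 2 * #G.edgeFinset - q * Fintype.card V)
        + (m - s) * (m + 1 - s) * #(highDegree G q) - m * (m + 1) * Fintype.card V ≤
      #(highDegree G q) * (#(highDegree G q) - 1) := by
  have hchord (v : V) : 2 * m * highDegreeCount G q v + 0 * G.degree v
      + (m - s) * (m + 1 - s) * (if q < G.degree v then 1 else 0) + -(m * (m + 1)) ≤
      highDegreeCount G q v * (highDegreeCount G q v - 1) := by
    split_ifs with hv
    · have := hs v (mem_highDegree.2 hv)
      nlinarith [mul_nonneg (sub_nonneg.2 this) (sub_nonneg.2 hsm)]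
    · linarith [two_mul_mul_sub_le_mul_sub_one m (highDegreeCount G q v)]
  linarith [hG.affine_highDegree_le hq hchord]

end C4Free

end HighDegree

section Extremal

variable {V : Type*} [Fintype V] {G : SimpleGraph V} [DecidableRel G.Adj]

namespace C4Free

lemma degree_le_and_le_highDegreeCount_of_card_eq_twelve [DecidableEq V] (hG : C4Free G)
    (hV : Fintype.card V = 12) (hE : #G.edgeFinset = 22) (hdeg : ∀ v, 3 ≤ G.degree v) (v : V) :
    G.degree v ≤ 4 ∧ 2 ≤ highDegreeCount G 3 v := by
  have hlocal := hG.mul_degree_add_highDegreeCount_lt_add_two_mul_half hdeg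
  simp only [hV] at hlocal
  have hchord (v : V) := affine_degree_highDegreeCount_le (hdeg v) (by have := hlocal v; omega)
  have hhigh : #(highDegree G 3) = 8 := by
    have hupper := mul_card_add_card_highDegree_le hdeg
    have hlower := two_mul_card_edgeFinset_le_of_degree_le (q := 3) (r := 2) (G := G) fun v => by
      have := hlocal v
      omega
    have hpairs := hG.affine_highDegree_le hdeg hchord
    rw [hV, hE] at hupper hlower hpairs
    push_cast at hpairs
    nlinarith
  have hcount : 2 ≤ highDegreeCount G 3 v := by
    have htight := hG.affine_highDegree_eq hdeg hchord (by rw [hhigh, hV, hE]; norm_num) v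
    by_contra! hlt
    obtain h | h : highDegreeCount G 3 v = 0 ∨ highDegreeCount G 3 v = 1 := by omega
    all_goals
      rw [h] at htight
      split_ifs at htight <;> omega
  have := hlocal v
  exact ⟨by omega, hcount⟩

lemma card_trianglesAt_add_two_of_card_eq_twelve [DecidableEq V] (hG : C4Free G)
    (hV : Fintype.card V = 12) (hE : #G.edgeFinset = 22) (hdeg : ∀ v, 3 ≤ G.degree v) (v : V) :
    #(trianglesAt G v) + 2 = G.degree v := by
  have hrigid := hG.degree_le_and_le_highDegreeCount_of_card_eq_twelve hV hE hdeg
  have hlocal := hG.mul_degree_add_highDegreeCount_lt hdeg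
  simp only [hV] at hlocal
  have hne : trianglesAt G v ≠ ∅ := by
    intro hempty
    obtain ⟨u, hu⟩ : (G.neighborFinset v ∩ highDegree G 3).Nonempty := by
      rw [← card_pos]
      exact zero_lt_two.trans_le (hrigid v).2
    simp only [mem_inter, mem_neighborFinset, mem_highDegree] at hu
    have := hG.two_mul_card_trianglesAt_lt hu.1.symm hempty
    have := hrigid u
    have := hlocal u
    omega
  have := card_pos.2 (nonempty_iff_ne_empty.2 hne)
  have := hG.two_mul_card_trianglesAt_le v
  have := hrigid v
  have := hlocal v
  have := hdeg v
  omega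

lemma card_edgeFinset_ne_of_card_eq_twelve (hG : C4Free G) (hV : Fintype.card V = 12)
    (hdeg : ∀ v, 3 ≤ G.degree v) : #G.edgeFinset ≠ 22 := by
  classical
  intro hE
  have hsum := sum_congr rfl fun v (_ : v ∈ univ) =>
    hG.card_trianglesAt_add_two_of_card_eq_twelve hV hE hdeg v
  rw [G.sum_degrees_eq_twice_card_edges, sum_add_distrib, sum_card_trianglesAt, sum_const,
    card_univ, hV, hE, smul_eq_mul] at hsum
  omega

lemma card_edgeFinset_ne_of_card_eq_fourteen (hG : C4Free G) (hV : Fintype.card V = 14)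
    (hdeg : ∀ v, 4 ≤ G.degree v) : #G.edgeFinset ≠ 28 := by
  classical
  intro hE
  have hhigh := mul_card_add_card_highDegree_le hdeg
  have hregular : ∀ v, G.degree v = 4 := by
    intro v
    have hempty : highDegree G 4 = ∅ := card_eq_zero.1 (by omega)
    have hv : v ∉ highDegree G 4 := by simp [hempty]
    rw [mem_highDegree] at hv
    exact le_antisymm (not_lt.1 hv) (hdeg v)
  have htwo : ∀ v ∈ univ, #(trianglesAt G v) = 2 := by
    intro v _
    have := hG.mul_degree_add_highDegreeCount_lt hdeg v
    have := hG.two_mul_card_trianglesAt_le v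
    have := hregular v
    omega
  have hsum := sum_card_trianglesAt G
  rw [sum_const_nat htwo, card_univ, hV] at hsum
  omega

lemma card_edgeFinset_le_two_mul_card (hG : C4Free G) (hV : Fintype.card V ≤ 16)
    (hdeg : ∀ v, 4 ≤ G.degree v) : #G.edgeFinset ≤ 2 * Fintype.card V := by
  classical
  have := two_mul_card_edgeFinset_le_of_degree_le (q := 4) (r := 0) (G := G) fun v => by
    have := hG.mul_degree_add_highDegreeCount_lt_add_two_mul_half hdeg v
    omega
  omega

lemma card_edgeFinset_ne_of_card_eq_seventeen (hG : C4Free G) (hV : Fintype.card V = 17)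
    (hdeg : ∀ v, 4 ≤ G.degree v) : #G.edgeFinset ≠ 37 := by
  classical
  intro hE
  have hlocal := hG.mul_degree_add_highDegreeCount_lt_add_two_mul_half hdeg
  simp only [hV] at hlocal
  have hhigh : #(highDegree G 4) = 6 := by
    have hupper := mul_card_add_card_highDegree_le hdeg
    have hlower := two_mul_card_edgeFinset_le_of_degree_le (q := 4) (r := 1) (G := G) fun v => by
      have := hlocal v
      omega
    omega
  have hpairs := hG.two_mul_mul_highDegree_le hdeg (m := 3) (s := 0) (by norm_num) fun v hv => by
    have := hlocal v
    rw [mem_highDegree] at hv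
    omega
  rw [hV, hE, hhigh] at hpairs
  norm_num at hpairs

lemma card_edgeFinset_ne_of_card_eq_eighteen (hG : C4Free G) (hV : Fintype.card V = 18)
    (hdeg : ∀ v, 4 ≤ G.degree v) : #G.edgeFinset ≠ 40 := by
  classical
  intro hE
  have hlocal := hG.mul_degree_add_highDegreeCount_lt_add_two_mul_half hdeg
  simp only [hV] at hlocal
  have hhigh : #(highDegree G 4) = 8 := by
    have hupper := mul_card_add_card_highDegree_le hdeg
    have hlower := two_mul_card_edgeFinset_le_of_degree_le (q := 4) (r := 1) (G := G) fun v => by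
      have := hlocal v
      omega
    omega
  have hpairs := hG.two_mul_mul_highDegree_le hdeg (m := 3) (s := 1) (by norm_num) fun v hv => by
    have := hlocal v
    rw [mem_highDegree] at hv
    omega
  rw [hV, hE, hhigh] at hpairs
  norm_num at hpairs

lemma card_edgeFinset_ne_of_card_eq_nineteen (hG : C4Free G) (hV : Fintype.card V = 19)
    (hdeg : ∀ v, 4 ≤ G.degree v) : #G.edgeFinset ≠ 43 := by
  classical
  intro hE
  have hlocal := hG.mul_degree_add_highDegreeCount_lt_add_two_mul_half hdeg
  simp only [hV] at hlocal
  have hupper := mul_card_add_card_highDegree_le hdeg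
  have hlower := two_mul_card_edgeFinset_le_of_degree_le (q := 4) (r := 2) (G := G) fun v => by
    have := hlocal v
    omega
  -- `hfew` fails if at most nine vertices have degree exceeding 4, `hmany` if ten do.
  have hfew := hG.affine_highDegree_le hdeg fun v =>
    affine_degree_highDegreeCount_le (hdeg v) (by have := hlocal v; omega)
  have hmany := hG.two_mul_mul_highDegree_le hdeg (m := 3) (s := 2) (by norm_num) fun v hv => by
    have := hlocal v
    rw [mem_highDegree] at hv
    omega
  rw [hV, hE] at hupper hlower hfew hmany
  have hlo : 5 ≤ #(highDegree G 4) := by omega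
  have hhi : #(highDegree G 4) ≤ 10 := by omega
  generalize #(highDegree G 4) = b at *
  interval_cases b <;> omega

end C4Free

lemma exists_le_card_edgeFinset_eq {m : ℕ} (hm : m ≤ #G.edgeFinset) :
    ∃ F ≤ G, ∃ _ : DecidableRel F.Adj, #F.edgeFinset = m := by
  classical
  obtain ⟨E, hEG, rfl⟩ := exists_subset_card_eq hm
  obtain ⟨F, hF⟩ : ∃ F : SimpleGraph V, F.edgeSet = E := by
    use fromEdgeSet E
    rw [edgeSet_fromEdgeSet, sdiff_eq_left, Set.disjoint_left]
    exact fun e he => G.not_isDiag_of_mem_edgeSet (mem_edgeFinset.1 (hEG he))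
  refine ⟨F, ?_, inferInstance, congrArg card (ext fun e => ?_)⟩
  · rw [← edgeSet_subset_edgeSet, hF]
    exact fun e he => mem_edgeFinset.1 (hEG he)
  · rw [mem_edgeFinset, hF, mem_coe]

/-- A counterexample to the bound, thinned to `m + k + 1` edges, has minimum degree exceeding `k`,
since deleting a vertex leaves at most `m` edges. -/
lemma extremalNumber_succ_le {W : Type*} {H : SimpleGraph W} {n m k : ℕ}
    (hn : extremalNumber n H ≤ m)
    (h : ∀ (G : SimpleGraph (Fin (n + 1))) [DecidableRel G.Adj], H.Free G →
      (∀ v, k + 1 ≤ G.degree v) → #G.edgeFinset ≠ m + k + 1) :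
    extremalNumber (n + 1) H ≤ m + k := by
  by_contra! hlt
  rw [← Fintype.card_fin (n + 1), lt_extremalNumber_iff] at hlt
  obtain ⟨G, _, hG, hcard⟩ := hlt
  obtain ⟨F, hFG, _, hF⟩ := exists_le_card_edgeFinset_eq (Nat.succ_le_of_lt hcard)
  have hfree : H.Free F := fun hHF => hG (hHF.mono_right hFG)
  refine h F hfree (fun v => ?_) hF
  have hdelete := card_edgeFinset_deleteIncidenceSet_le_extremalNumber hfree v
  rw [card_edgeFinset_deleteIncidenceSet, hF, Fintype.card_fin, Nat.add_sub_cancel] at hdelete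
  omega

lemma extremalNumber_eleven_cycleGraph_four_le : extremalNumber 11 (cycleGraph 4) ≤ 19 := by
  rw [← Fintype.card_fin 11, extremalNumber_le_iff]
  intro G _ hG
  have := C4Free.mul_card_edgeFinset_le hG 2
  rw [Fintype.card_fin] at this
  omega

lemma extremalNumber_thirteen_cycleGraph_four_le : extremalNumber 13 (cycleGraph 4) ≤ 24 := by
  have htwelve : extremalNumber 12 (cycleGraph 4) ≤ 21 :=
    extremalNumber_succ_le (k := 2) extremalNumber_eleven_cycleGraph_four_le fun G _ hG hdeg =>
      C4Free.card_edgeFinset_ne_of_card_eq_twelve hG (Fintype.card_fin 12) hdeg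
  refine extremalNumber_succ_le (k := 3) htwelve fun G _ _ hdeg hE => ?_
  have hsum := sum_le_sum fun v (_ : v ∈ univ) => hdeg v
  rw [G.sum_degrees_eq_twice_card_edges, hE, sum_const, card_univ, Fintype.card_fin] at hsum
  norm_num at hsum

lemma extremalNumber_sixteen_cycleGraph_four_le : extremalNumber 16 (cycleGraph 4) ≤ 33 := by
  have hfourteen : extremalNumber 14 (cycleGraph 4) ≤ 27 :=
    extremalNumber_succ_le (k := 3) extremalNumber_thirteen_cycleGraph_four_le fun G _ hG hdeg =>
      C4Free.card_edgeFinset_ne_of_card_eq_fourteen hG (Fintype.card_fin 14) hdeg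
  have hfifteen : extremalNumber 15 (cycleGraph 4) ≤ 30 :=
    extremalNumber_succ_le (k := 3) hfourteen fun G _ hG hdeg hE => by
      have := C4Free.card_edgeFinset_le_two_mul_card hG (by simp) hdeg
      rw [hE, Fintype.card_fin] at this
      omega
  refine extremalNumber_succ_le (k := 3) hfifteen fun G _ hG hdeg hE => ?_
  have := C4Free.card_edgeFinset_le_two_mul_card hG (by simp) hdeg
  rw [hE, Fintype.card_fin] at this
  omega

lemma extremalNumber_nineteen_cycleGraph_four_le : extremalNumber 19 (cycleGraph 4) ≤ 42 := by
  have hseventeen : extremalNumber 17 (cycleGraph 4) ≤ 36 :=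
    extremalNumber_succ_le (k := 3) extremalNumber_sixteen_cycleGraph_four_le fun G _ hG hdeg =>
      C4Free.card_edgeFinset_ne_of_card_eq_seventeen hG (Fintype.card_fin 17) hdeg
  have heighteen : extremalNumber 18 (cycleGraph 4) ≤ 39 :=
    extremalNumber_succ_le (k := 3) hseventeen fun G _ hG hdeg =>
      C4Free.card_edgeFinset_ne_of_card_eq_eighteen hG (Fintype.card_fin 18) hdeg
  exact extremalNumber_succ_le (k := 3) heighteen fun G _ hG hdeg =>
    C4Free.card_edgeFinset_ne_of_card_eq_nineteen hG (Fintype.card_fin 19) hdeg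

end Extremal

section Coloring

variable {V : Type*} {k : ℕ}

lemma colorClass_adj {c : Sym2 V → Fin k} {i : Fin k} {u v : V} :
    (colorClass c i).Adj u v ↔ u ≠ v ∧ c s(u, v) = i := by
  simp [colorClass, Sym2.eq_swap (a := v)]

lemma contains_iff_isContained {W : Type*} {H : SimpleGraph W} {G : SimpleGraph V} :
    Contains H G ↔ H ⊑ G :=
  ⟨fun ⟨f, hf⟩ => ⟨⟨f, hf⟩⟩, fun ⟨f⟩ => ⟨f.toHom, f.injective⟩⟩

variable [Fintype V]

open Classical in
lemma sum_card_edgeFinset_colorClass (c : Sym2 V → Fin k) :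
    ∑ i, #(colorClass c i).edgeFinset = (Fintype.card V).choose 2 := by
  have hfiber (i : Fin k) :
      (colorClass c i).edgeFinset = {e ∈ (⊤ : SimpleGraph V).edgeFinset | c e = i} := by
    ext e
    induction e with
    | _ u v => simp [colorClass_adj]
  rw [← card_edgeFinset_top_eq_card_choose_two,
    card_eq_sum_card_fiberwise (f := c) (t := univ) (by simp)]
  simp only [hfiber]

lemma exists_contains_colorClass {W : Type*} {H : SimpleGraph W}
    (hcard : k * extremalNumber (Fintype.card V) H < (Fintype.card V).choose 2)
    (c : Sym2 V → Fin k) : ∃ i, Contains H (colorClass c i) := by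
  classical
  have hsum : ∑ _i : Fin k, extremalNumber (Fintype.card V) H <
      ∑ i, #(colorClass c i).edgeFinset := by
    simpa [sum_card_edgeFinset_colorClass] using hcard
  obtain ⟨i, -, hi⟩ := exists_lt_of_sum_lt hsum
  exact ⟨i, contains_iff_isContained.2 (.of_extremalNumber_lt_card_edgeFinset hi)⟩

end Coloring

end

theorem stmt1 :
    ∀ c : Sym2 (Fin 19) → Fin 4,
      ∃ i : Fin 4, Contains (cycleGraph 4) (colorClass c i) := by
  apply exists_contains_colorClass
  have hchoose : (19).choose 2 = 171 := rfl
  rw [Fintype.card_fin, hchoose]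
  have := extremalNumber_nineteen_cycleGraph_four_le
  omega
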